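/- arXiv:2212.13343 — 2 statements merged into one kernel-verified Lean document; each statement's English description precedes it below -/
import Mathlib

section
/- For every m ∈ [2,∞) and every ζ ∈ (1 + m/2, ∞) there exists a constant C = C(m,ζ) > 0 such that for every continuously differentiable function v : ℝ² → ℝ whose gradient ∇v belongs to L²(ℝ²), one has (∫_{ℝ²} |v(x)|^m (e+|x|²)^{-1} (log(e+|x|²))^{-ζ} dx)^{1/m} ≤ C‖v‖_{L²(B₁)} + C‖∇v‖_{L²(ℝ²)}. -/
open MeasureTheory Real Set Metric

noncomputable section

abbrev E2 := EuclideanSpace ℝ (Fin 2)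

/-!
On `B_{1/2} ⊂ B_1` the `L^m` norm of a function is controlled by its `L²` norm and that of its
gradient. Apply this to `x ↦ v (s x)`. In dimension two the `L²` norm of the gradient is invariant
under dilation, and `‖v(s ·)‖_{L²(B_1)}` grows only like `√(log s)`: along the ray through `x`, the
Cauchy–Schwarz inequality for the measure `dt / t` on `[1, s]` gives
`|v(s x) - v(x)|² ≤ log s * ∫ |t x|² |∇v(t x)|² dt / t`, and integrating over `B_1` leaves at most
`log s * ‖∇v‖²`. On the annulus `|x| ≈ 2^n` the weight is at most a constant times
`4^{-n} (n + 1)^{-ζ}`, so the dyadic pieces sum to `∑ (n + 1)^{m/2 - ζ}`, which converges exactly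
when `ζ > 1 + m/2`.
-/

open Module
open scoped ENNReal NNReal

/-! ### Integrals in `[0, ∞]` -/

lemma sq_lintegral_mul_le {α : Type*} [MeasurableSpace α] {μ : Measure α} {w f : α → ℝ≥0∞}
    (hw : AEMeasurable w μ) (hf : AEMeasurable f μ) :
    (∫⁻ a, w a * f a ∂μ) ^ 2 ≤ (∫⁻ a, w a ∂μ) * ∫⁻ a, w a * f a ^ 2 ∂μ := by
  have sqrt_sq (c : ℝ≥0∞) : (c ^ (1 / 2 : ℝ)) ^ 2 = c := by
    rw [← ENNReal.rpow_two, ← ENNReal.rpow_mul]; norm_num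
  have hölder := ENNReal.lintegral_mul_le_Lp_mul_Lq μ Real.HolderConjugate.two_two
    (hw.pow_const (1 / 2 : ℝ)) ((hw.pow_const (1 / 2 : ℝ)).mul hf)
  simp only [Pi.mul_apply, ENNReal.rpow_two, mul_pow, sqrt_sq, ← mul_assoc, ← pow_two] at hölder
  calc (∫⁻ a, w a * f a ∂μ) ^ 2
      ≤ ((∫⁻ a, w a ∂μ) ^ (1 / 2 : ℝ) * (∫⁻ a, w a * f a ^ 2 ∂μ) ^ (1 / 2 : ℝ)) ^ 2 := by gcongr
    _ = (∫⁻ a, w a ∂μ) * ∫⁻ a, w a * f a ^ 2 ∂μ := by rw [mul_pow, sqrt_sq, sqrt_sq]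

lemma lintegral_Ioc_inv {a b : ℝ} (ha : 0 < a) (hab : a ≤ b) :
    ∫⁻ t in Ioc a b, ENNReal.ofReal t⁻¹ = ENNReal.ofReal (log (b / a)) := by
  have hpos : ∀ t ∈ uIcc a b, id t ≠ 0 := fun t ht => by
    rw [uIcc_of_le hab] at ht
    exact (ha.trans_le ht.1).ne'
  rw [← integral_inv_of_pos ha (ha.trans_le hab), intervalIntegral.integral_of_le hab,
    ofReal_integral_eq_lintegral_ofReal]
  · exact (intervalIntegral.intervalIntegrable_inv hpos continuousOn_id).1
  · filter_upwards [ae_restrict_mem measurableSet_Ioc] with t ht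
    exact inv_nonneg.2 (ha.trans ht.1).le

lemma lintegral_Ioi_inv_pow_succ_le {c : ℝ} (hc : 0 < c) {d : ℕ} (hd : d ≠ 0) :
    ∫⁻ t in Ioi c, ENNReal.ofReal (t ^ (d + 1))⁻¹ ≤ ENNReal.ofReal (c ^ d)⁻¹ := by
  have hd' : (1 : ℝ) ≤ d := by exact_mod_cast Nat.one_le_iff_ne_zero.2 hd
  have hexp : -(d + 1 : ℝ) < -1 := by linarith
  calc ∫⁻ t in Ioi c, ENNReal.ofReal (t ^ (d + 1))⁻¹
      = ∫⁻ t in Ioi c, ENNReal.ofReal (t ^ (-(d + 1 : ℝ))) := by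
        refine setLIntegral_congr_fun measurableSet_Ioi fun t ht => ?_
        rw [rpow_neg (hc.trans ht).le]
        norm_cast
    _ = ENNReal.ofReal (∫ t in Ioi c, t ^ (-(d + 1 : ℝ))) := by
        refine (ofReal_integral_eq_lintegral_ofReal (integrableOn_Ioi_rpow_of_lt hexp hc) ?_).symm
        filter_upwards [ae_restrict_mem measurableSet_Ioi] with t ht
        exact rpow_nonneg (hc.trans ht).le _
    _ = ENNReal.ofReal ((c ^ d)⁻¹ / d) := by
        rw [integral_Ioi_rpow_of_lt hexp hc, neg_add, neg_add_cancel_right, neg_div_neg_eq,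
          rpow_neg hc.le, rpow_natCast]
    _ ≤ ENNReal.ofReal (c ^ d)⁻¹ :=
        ENNReal.ofReal_le_ofReal (div_le_self (by positivity) hd')

lemma lintegral_Ioi_norm_inv_pow_succ_mul_le_one {E : Type*} [NormedAddCommGroup E]
    {d : ℕ} (hd : d ≠ 0) (x : E) :
    (∫⁻ t in Ioi ‖x‖, ENNReal.ofReal (t ^ (d + 1))⁻¹) * ‖x‖ₑ ^ d ≤ 1 := by
  rcases eq_or_ne x 0 with rfl | hx
  · simp [hd]
  have hx0 : 0 < ‖x‖ := norm_pos_iff.2 hx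
  calc (∫⁻ t in Ioi ‖x‖, ENNReal.ofReal (t ^ (d + 1))⁻¹) * ‖x‖ₑ ^ d
      ≤ ENNReal.ofReal (‖x‖ ^ d)⁻¹ * ENNReal.ofReal (‖x‖ ^ d) := by
        rw [← ofReal_norm, ← ENNReal.ofReal_pow hx0.le]
        gcongr
        exact lintegral_Ioi_inv_pow_succ_le hx0 hd
    _ = 1 := by
        rw [← ENNReal.ofReal_mul (by positivity), inv_mul_cancel₀ (by positivity),
          ENNReal.ofReal_one]

lemma eLpNorm_two_sq {α G : Type*} [MeasurableSpace α] {ν : Measure α} [NormedAddCommGroup G]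
    (f : α → G) : eLpNorm f 2 ν ^ 2 = ∫⁻ x, ‖f x‖ₑ ^ 2 ∂ν := by
  simpa using eLpNorm_nnreal_pow_eq_lintegral (f := f) (μ := ν) (two_ne_zero (α := ℝ≥0))

lemma toReal_eLpNorm_two_eq_rpow_integral {α G : Type*} [MeasurableSpace α] {ν : Measure α}
    [NormedAddCommGroup G] {f : α → G} (hf : MemLp f 2 ν) :
    (eLpNorm f 2 ν).toReal = (∫ x, ‖f x‖ ^ 2 ∂ν) ^ (1 / 2 : ℝ) := by
  rw [hf.eLpNorm_eq_integral_rpow_norm two_ne_zero ENNReal.ofNat_ne_top,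
    ENNReal.toReal_ofReal (by positivity)]
  norm_num

/-! ### The logarithmic weight -/

/-- The radial weight `(e + r²)⁻¹ (log (e + r²))^(-ζ)`, as a function of the radius `r`. -/
def logWeight (ζ r : ℝ) : ℝ := (exp 1 + r ^ 2)⁻¹ * log (exp 1 + r ^ 2) ^ (-ζ)

lemma one_le_log_exp_one_add_sq (r : ℝ) : 1 ≤ log (exp 1 + r ^ 2) :=
  (le_log_iff_exp_le (by positivity)).2 (le_add_of_nonneg_right (sq_nonneg r))

lemma logWeight_nonneg (ζ r : ℝ) : 0 ≤ logWeight ζ r :=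
  mul_nonneg (by positivity) (rpow_nonneg (zero_le_one.trans (one_le_log_exp_one_add_sq r)) _)

lemma measurable_logWeight (ζ : ℝ) : Measurable (logWeight ζ) := by
  unfold logWeight
  fun_prop

lemma exists_four_pow_le_exp_one_add_sq (r : ℝ) :
    ∃ n : ℕ, r < 2 ^ (n + 1) ∧ (4 : ℝ) ^ n ≤ exp 1 + r ^ 2 := by
  obtain ⟨n, hn, hn'⟩ := exists_nat_pow_near (le_max_left 1 r) one_lt_two
  refine ⟨n, (le_max_right 1 r).trans_lt hn', ?_⟩
  have he : 1 ≤ exp 1 := one_le_exp one_pos.le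
  rw [show (4 : ℝ) = 2 ^ 2 by norm_num, pow_right_comm]
  rcases le_max_iff.1 hn with h | h
  · nlinarith [pow_le_one₀ (n := 2) (by positivity) h, sq_nonneg r]
  · nlinarith [pow_le_pow_left₀ (by positivity) h 2]

lemma logWeight_le_of_four_pow_le {ζ : ℝ} (hζ : 0 ≤ ζ) {n : ℕ} {r : ℝ}
    (hn : (4 : ℝ) ^ n ≤ exp 1 + r ^ 2) :
    logWeight ζ r ≤ 2 ^ ζ * (((4 : ℝ) ^ n)⁻¹ * (n + 1 : ℝ) ^ (-ζ)) := by
  have hlog4 : 1 ≤ log 4 := by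
    rw [le_log_iff_exp_le (by norm_num)]
    exact exp_one_lt_three.le.trans (by norm_num)
  have hlog : (n + 1 : ℝ) / 2 ≤ log (exp 1 + r ^ 2) := by
    have hlogn : n * log 4 ≤ log (exp 1 + r ^ 2) := by
      rw [← log_pow]
      exact log_le_log (by positivity) hn
    nlinarith [one_le_log_exp_one_add_sq r, n.cast_nonneg (α := ℝ)]
  calc logWeight ζ r
      ≤ ((4 : ℝ) ^ n)⁻¹ * ((n + 1 : ℝ) / 2) ^ (-ζ) := by
        refine mul_le_mul (inv_anti₀ (by positivity) hn) ?_ (rpow_nonneg ?_ _) (by positivity)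
        · exact rpow_le_rpow_of_nonpos (by positivity) hlog (neg_nonpos.2 hζ)
        · exact zero_le_one.trans (one_le_log_exp_one_add_sq r)
    _ = 2 ^ ζ * (((4 : ℝ) ^ n)⁻¹ * (n + 1 : ℝ) ^ (-ζ)) := by
        rw [div_rpow (by positivity) zero_le_two, rpow_neg zero_le_two, div_inv_eq_mul]
        ring

lemma lintegral_logWeight_mul_le_tsum {X : Type*} [NormedAddCommGroup X] [MeasurableSpace X]
    [OpensMeasurableSpace X] {ν : Measure X} {ζ : ℝ} (hζ : 0 ≤ ζ) {f : X → ℝ≥0∞}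
    (hf : AEMeasurable f ν) :
    ∫⁻ x, ENNReal.ofReal (logWeight ζ ‖x‖) * f x ∂ν ≤
      ∑' n : ℕ, ENNReal.ofReal (2 ^ ζ * (((4 : ℝ) ^ n)⁻¹ * (n + 1 : ℝ) ^ (-ζ))) *
        ∫⁻ x in ball 0 (2 ^ (n + 1)), f x ∂ν := by
  let c (n : ℕ) : ℝ≥0∞ := ENNReal.ofReal (2 ^ ζ * (((4 : ℝ) ^ n)⁻¹ * (n + 1 : ℝ) ^ (-ζ)))
  let B (n : ℕ) : Set X := ball 0 (2 ^ (n + 1))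
  have pointwise (x : X) :
      ENNReal.ofReal (logWeight ζ ‖x‖) * f x ≤ ∑' n, c n * (B n).indicator f x := by
    obtain ⟨n, hxn, hn⟩ := exists_four_pow_le_exp_one_add_sq ‖x‖
    have hxB : x ∈ B n := mem_ball_zero_iff.2 hxn
    calc ENNReal.ofReal (logWeight ζ ‖x‖) * f x
        ≤ c n * (B n).indicator f x := by
          rw [indicator_of_mem hxB]
          gcongr
          exact ENNReal.ofReal_le_ofReal (logWeight_le_of_four_pow_le hζ hn)
      _ ≤ ∑' n, c n * (B n).indicator f x := ENNReal.le_tsum n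
  calc ∫⁻ x, ENNReal.ofReal (logWeight ζ ‖x‖) * f x ∂ν
      ≤ ∫⁻ x, ∑' n, c n * (B n).indicator f x ∂ν := lintegral_mono pointwise
    _ = ∑' n, ∫⁻ x, c n * (B n).indicator f x ∂ν :=
        lintegral_tsum fun n => (hf.indicator measurableSet_ball).const_mul _
    _ = ∑' n, c n * ∫⁻ x in B n, f x ∂ν := by
        congr with n
        rw [lintegral_const_mul' _ _ ENNReal.ofReal_ne_top, lintegral_indicator measurableSet_ball]

lemma one_add_sqrt_log_two_pow_le (n : ℕ) : 1 + √(log (2 ^ (n + 2))) ≤ 3 * √(n + 1) := by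
  have hlog : log (2 ^ (n + 2)) ≤ 2 ^ 2 * (n + 1 : ℝ) := by
    rw [log_pow]
    push_cast
    nlinarith [log_two_lt_d9, n.cast_nonneg (α := ℝ)]
  have hsqrt : √(log (2 ^ (n + 2))) ≤ 2 * √(n + 1) :=
    (sqrt_le_sqrt hlog).trans_eq (by rw [sqrt_mul (by positivity), sqrt_sq zero_le_two])
  have hone : 1 ≤ √(n + 1 : ℝ) := one_le_sqrt.2 (by simp)
  linarith

lemma summable_dyadic_bounds {q ζ : ℝ} (hζ : 1 + q / 2 < ζ) :
    Summable fun n : ℕ => 2 ^ ζ * (((4 : ℝ) ^ n)⁻¹ * (n + 1 : ℝ) ^ (-ζ)) *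
      (16 * 4 ^ n * (3 * √(n + 1)) ^ q) := by
  have hexp : q / 2 - ζ < -1 := by linarith
  have hseries : Summable fun n : ℕ => 2 ^ ζ * 16 * 3 ^ q * (n + 1 : ℝ) ^ (q / 2 - ζ) := by
    refine Summable.mul_left _ ?_
    simpa only [Nat.cast_succ] using (summable_nat_add_iff 1).2 (Real.summable_nat_rpow.2 hexp)
  refine hseries.congr fun n => ?_
  have hpow : (n + 1 : ℝ) ^ (q / 2 - ζ) = √(n + 1) ^ q * (n + 1 : ℝ) ^ (-ζ) := by
    rw [sqrt_eq_rpow, ← rpow_mul (by positivity), ← rpow_add (by positivity)]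
    ring_nf
  rw [hpow, mul_rpow zero_le_three (sqrt_nonneg _)]
  field_simp

/-! ### Cut-off functions -/

section Cutoff

variable {E F : Type*} [NormedAddCommGroup E] [NormedSpace ℝ E]
  [NormedAddCommGroup F] [NormedSpace ℝ F]

lemma exists_norm_fderiv_smul_le {χ : E → ℝ} (hχ : ContDiff ℝ 1 χ) (hχc : HasCompactSupport χ) :
    ∃ K : ℝ≥0, ∀ u : E → F, Differentiable ℝ u → ∀ x,
      ‖fderiv ℝ (χ • u) x‖ ≤ K * (‖u x‖ + ‖fderiv ℝ u x‖) := by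
  obtain ⟨A, hA⟩ := hχc.exists_bound_of_continuous hχ.continuous
  obtain ⟨B, hB⟩ := (hχc.fderiv (𝕜 := ℝ)).exists_bound_of_continuous
    (hχ.continuous_fderiv one_ne_zero)
  refine ⟨(max A B).toNNReal, fun u hu x => ?_⟩
  rw [fderiv_smul (hχ.differentiable one_ne_zero x) (hu x), mul_add, add_comm]
  refine (norm_add_le _ _).trans ?_
  rw [norm_smul, ContinuousLinearMap.norm_smulRight_apply]
  gcongr
  · exact (hB x).trans ((le_max_right A B).trans (le_coe_toNNReal _))
  · exact (hA x).trans ((le_max_left A B).trans (le_coe_toNNReal _))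

lemma exists_eLpNorm_fderiv_smul_le [MeasurableSpace E] [OpensMeasurableSpace E]
    [SecondCountableTopology E] (μ : Measure E) {χ : E → ℝ} (hχ : ContDiff ℝ 1 χ)
    (hχc : HasCompactSupport χ) {s : Set E} (hs : tsupport χ ⊆ s) {p : ℝ≥0∞} (hp : 1 ≤ p) :
    ∃ K : ℝ≥0, ∀ u : E → F, ContDiff ℝ 1 u → eLpNorm (fderiv ℝ (χ • u)) p μ ≤
      K * (eLpNorm u p (μ.restrict s) + eLpNorm (fderiv ℝ u) p (μ.restrict s)) := by
  obtain ⟨K, hK⟩ := exists_norm_fderiv_smul_le (F := F) hχ hχc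
  refine ⟨K, fun u hu => ?_⟩
  have hbound (x : E) : ‖fderiv ℝ (χ • u) x‖₊ ≤ K * ‖(‖u x‖ + ‖fderiv ℝ u x‖)‖₊ := by
    simpa [← NNReal.coe_le_coe, abs_of_nonneg (add_nonneg (norm_nonneg _) (norm_nonneg _))]
      using hK u (hu.differentiable one_ne_zero) x
  have hsupp : (fderiv ℝ (χ • u)).support ⊆ s :=
    (support_fderiv_subset ℝ).trans ((tsupport_smul_subset_left χ u).trans hs)
  calc eLpNorm (fderiv ℝ (χ • u)) p μ
      = eLpNorm (fderiv ℝ (χ • u)) p (μ.restrict s) :=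
        (eLpNorm_restrict_eq_of_support_subset (ε := E →L[ℝ] F) hsupp).symm
    _ ≤ K * eLpNorm (fun x => ‖u x‖ + ‖fderiv ℝ u x‖) p (μ.restrict s) :=
        eLpNorm_le_nnreal_smul_eLpNorm_of_ae_le_mul (.of_forall hbound) p
    _ ≤ K * (eLpNorm (fun x => ‖u x‖) p (μ.restrict s) +
          eLpNorm (fun x => ‖fderiv ℝ u x‖) p (μ.restrict s)) := by
        gcongr
        exact eLpNorm_add_le hu.continuous.norm.aestronglyMeasurable
          (hu.continuous_fderiv one_ne_zero).norm.aestronglyMeasurable hp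
    _ = K * (eLpNorm u p (μ.restrict s) + eLpNorm (fderiv ℝ u) p (μ.restrict s)) := by
        rw [eLpNorm_norm, eLpNorm_norm]

end Cutoff

/-! ### Dilations and the growth of `L²` norms -/

section Haar

variable {E F : Type*} [NormedAddCommGroup E] [NormedSpace ℝ E]
  [NormedAddCommGroup F] [NormedSpace ℝ F]

lemma enorm_sub_sq_le_log_mul_lintegral [CompleteSpace F] {g : ℝ → F} (hg : ContDiff ℝ 1 g)
    {a b : ℝ} (ha : 0 < a) (hab : a ≤ b) :
    ‖g b - g a‖ₑ ^ 2 ≤ ENNReal.ofReal (log (b / a)) *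
      ∫⁻ t in Ioc a b, ENNReal.ofReal t⁻¹ * ‖t • deriv g t‖ₑ ^ 2 := by
  have hg' : Continuous (deriv g) := hg.continuous_deriv le_rfl
  have ftc : ∫ t in a..b, deriv g t = g b - g a :=
    intervalIntegral.integral_deriv_eq_sub (fun t _ => hg.differentiable one_ne_zero t)
      (hg'.intervalIntegrable a b)
  have hdiff : ‖g b - g a‖ₑ ≤ ∫⁻ t in Ioc a b, ENNReal.ofReal t⁻¹ * ‖t • deriv g t‖ₑ := by
    rw [← ftc, intervalIntegral.integral_of_le hab]
    refine (enorm_integral_le_lintegral_enorm _).trans_eq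
      (setLIntegral_congr_fun measurableSet_Ioc fun t ht => ?_)
    have ht0 : 0 < t := ha.trans ht.1
    rw [← Real.enorm_of_nonneg (inv_nonneg.2 ht0.le), ← enorm_smul, inv_smul_smul₀ ht0.ne']
  calc ‖g b - g a‖ₑ ^ 2
      ≤ (∫⁻ t in Ioc a b, ENNReal.ofReal t⁻¹ * ‖t • deriv g t‖ₑ) ^ 2 := by gcongr
    _ ≤ (∫⁻ t in Ioc a b, ENNReal.ofReal t⁻¹) *
          ∫⁻ t in Ioc a b, ENNReal.ofReal t⁻¹ * ‖t • deriv g t‖ₑ ^ 2 :=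
        sq_lintegral_mul_le (by fun_prop) (by fun_prop)
    _ = ENNReal.ofReal (log (b / a)) *
          ∫⁻ t in Ioc a b, ENNReal.ofReal t⁻¹ * ‖t • deriv g t‖ₑ ^ 2 := by
        rw [lintegral_Ioc_inv ha hab]

lemma enorm_smul_sub_sq_le_log_mul_lintegral [CompleteSpace F] {v : E → F} (hv : ContDiff ℝ 1 v)
    {s : ℝ} (hs : 1 ≤ s) (x : E) :
    ‖v (s • x) - v x‖ₑ ^ 2 ≤ ENNReal.ofReal (log s) *
      ∫⁻ t in Ioi 1, ENNReal.ofReal t⁻¹ * (‖t • x‖ₑ ^ 2 * ‖fderiv ℝ v (t • x)‖ₑ ^ 2) := by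
  have hray : ContDiff ℝ 1 fun t : ℝ => v (t • x) := hv.comp (contDiff_id.smul contDiff_const)
  have hderiv (t : ℝ) : deriv (fun t : ℝ => v (t • x)) t = fderiv ℝ v (t • x) x := by
    have hline : HasDerivAt (fun t : ℝ => t • x) x t := by
      simpa using (hasDerivAt_id t).smul_const x
    exact ((hv.differentiable one_ne_zero _).hasFDerivAt.comp_hasDerivAt t hline).deriv
  have hbound (t : ℝ) : ‖t • deriv (fun t : ℝ => v (t • x)) t‖ₑ ^ 2 ≤
      ‖t • x‖ₑ ^ 2 * ‖fderiv ℝ v (t • x)‖ₑ ^ 2 := by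
    rw [hderiv, ← map_smul, mul_comm, ← mul_pow]
    gcongr
    exact (fderiv ℝ v (t • x)).le_opENorm _
  calc ‖v (s • x) - v x‖ₑ ^ 2
      ≤ ENNReal.ofReal (log s) * ∫⁻ t in Ioc 1 s,
          ENNReal.ofReal t⁻¹ * ‖t • deriv (fun t : ℝ => v (t • x)) t‖ₑ ^ 2 := by
        simpa using enorm_sub_sq_le_log_mul_lintegral hray one_pos hs
    _ ≤ ENNReal.ofReal (log s) * ∫⁻ t in Ioi 1,
          ENNReal.ofReal t⁻¹ * (‖t • x‖ₑ ^ 2 * ‖fderiv ℝ v (t • x)‖ₑ ^ 2) := by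
        gcongr
        · exact Ioc_subset_Ioi_self
        · exact hbound _

variable [FiniteDimensional ℝ E] [MeasurableSpace E] [BorelSpace E]
  (μ : Measure E) [μ.IsAddHaarMeasure]

lemma lintegral_comp_smul (f : E → ℝ≥0∞) {s : ℝ} (hs : 0 < s) :
    ∫⁻ x, f (s • x) ∂μ = ENNReal.ofReal (s ^ finrank ℝ E)⁻¹ * ∫⁻ x, f x ∂μ := by
  have hmap : ∫⁻ x, f x ∂(μ.map (s • ·)) = ∫⁻ x, f (s • x) ∂μ :=
    (Homeomorph.smulOfNeZero s hs.ne').measurableEmbedding.lintegral_map f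
  rw [← hmap, Measure.map_addHaar_smul μ hs.ne', lintegral_smul_measure,
    abs_of_pos (by positivity), smul_eq_mul]

lemma setLIntegral_ball_comp_smul (f : E → ℝ≥0∞) {s : ℝ} (hs : 0 < s) (r : ℝ) :
    ∫⁻ x in ball 0 r, f (s • x) ∂μ =
      ENNReal.ofReal (s ^ finrank ℝ E)⁻¹ * ∫⁻ x in ball 0 (s * r), f x ∂μ := by
  have hball (x : E) : s • x ∈ ball (0 : E) (s * r) ↔ x ∈ ball (0 : E) r := by
    simp [norm_smul, abs_of_pos hs, hs]
  rw [← lintegral_indicator measurableSet_ball, ← lintegral_indicator measurableSet_ball,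
    ← lintegral_comp_smul μ _ hs]
  refine lintegral_congr fun x => ?_
  by_cases hx : x ∈ ball (0 : E) r
  · rw [indicator_of_mem hx, indicator_of_mem ((hball x).2 hx)]
  · rw [indicator_of_notMem hx, indicator_of_notMem (mt (hball x).1 hx)]

lemma lintegral_ball_lintegral_Ioi_smul_le [Nontrivial E] {f : E → ℝ≥0∞} (hf : Measurable f) :
    ∫⁻ x in ball 0 1, (∫⁻ t in Ioi (1 : ℝ),
        ENNReal.ofReal t⁻¹ * (‖t • x‖ₑ ^ finrank ℝ E * f (t • x))) ∂μ ≤ ∫⁻ y, f y ∂μ := by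
  set d := finrank ℝ E
  -- After substituting `y = t x`, the point `y` has mass `∫_{t > |y|} |y|^d t^{-d-1} dt ≤ 1`.
  let kernel (y : E) : ℝ → ℝ≥0∞ := (Ioi ‖y‖).indicator fun t => ENNReal.ofReal (t ^ (d + 1))⁻¹
  have dilate : ∀ t ∈ Ioi (1 : ℝ),
      ∫⁻ x in ball 0 1, ENNReal.ofReal t⁻¹ * (‖t • x‖ₑ ^ d * f (t • x)) ∂μ =
        ∫⁻ y, kernel y t * (‖y‖ₑ ^ d * f y) ∂μ := fun t ht => by
    have ht0 : 0 < t := one_pos.trans ht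
    rw [setLIntegral_ball_comp_smul μ (fun y => ENNReal.ofReal t⁻¹ * (‖y‖ₑ ^ d * f y)) ht0 1,
      mul_one, ← lintegral_const_mul' _ _ ENNReal.ofReal_ne_top,
      ← lintegral_indicator measurableSet_ball]
    congr with y
    by_cases hy : ‖y‖ < t
    · simp only [kernel, indicator, mem_ball_zero_iff, mem_Ioi, hy, if_true]
      rw [← mul_assoc, ← ENNReal.ofReal_mul (by positivity), pow_succ, mul_inv]
    · simp [kernel, indicator, hy]
  have kernel_meas : Measurable fun z : ℝ × E => kernel z.2 z.1 :=
    Measurable.indicator (s := {z : ℝ × E | ‖z.2‖ < z.1})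
      (f := fun z : ℝ × E => ENNReal.ofReal (z.1 ^ (d + 1))⁻¹) (by fun_prop)
      (measurableSet_lt (by fun_prop) (by fun_prop))
  have kernel_mul_le (y : E) : ∫⁻ t in Ioi (1 : ℝ), kernel y t * (‖y‖ₑ ^ d * f y) ≤ f y := by
    rw [lintegral_mul_const _ (Measurable.indicator (by fun_prop) measurableSet_Ioi), ← mul_assoc]
    have hkernel : ∫⁻ t in Ioi (1 : ℝ), kernel y t ≤
        ∫⁻ t in Ioi ‖y‖, ENNReal.ofReal (t ^ (d + 1))⁻¹ :=
      (setLIntegral_le_lintegral _ _).trans_eq (lintegral_indicator measurableSet_Ioi _)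
    refine mul_le_of_le_one_left' (le_trans ?_
      (lintegral_Ioi_norm_inv_pow_succ_mul_le_one (finrank_pos (R := ℝ) (M := E)).ne' y))
    gcongr
  calc _ = ∫⁻ t in Ioi (1 : ℝ), (∫⁻ x in ball 0 1,
          ENNReal.ofReal t⁻¹ * (‖t • x‖ₑ ^ d * f (t • x)) ∂μ) :=
        lintegral_lintegral_swap (by fun_prop)
    _ = ∫⁻ t in Ioi (1 : ℝ), (∫⁻ y, kernel y t * (‖y‖ₑ ^ d * f y) ∂μ) :=
        setLIntegral_congr_fun measurableSet_Ioi dilate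
    _ = ∫⁻ y, (∫⁻ t in Ioi (1 : ℝ), kernel y t * (‖y‖ₑ ^ d * f y)) ∂μ :=
        lintegral_lintegral_swap (kernel_meas.mul (by fun_prop)).aemeasurable
    _ ≤ ∫⁻ y, f y ∂μ := lintegral_mono kernel_mul_le

lemma eLpNorm_fderiv_comp_smul [Nontrivial E] (v : E → F) {s : ℝ} (hs : 0 < s) :
    eLpNorm (fderiv ℝ fun x => v (s • x)) (finrank ℝ E) μ =
      eLpNorm (fderiv ℝ v) (finrank ℝ E) μ := by
  set d := finrank ℝ E with hd
  have hd0 : (d : ℝ≥0∞) ≠ 0 := by exact_mod_cast finrank_pos.ne'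
  simp only [eLpNorm_eq_lintegral_rpow_enorm_toReal hd0 (ENNReal.natCast_ne_top d),
    ENNReal.toReal_natCast, ENNReal.rpow_natCast, fderiv_comp_smul, enorm_smul, mul_pow]
  rw [lintegral_const_mul' _ _ (by finiteness), lintegral_comp_smul μ (‖fderiv ℝ v ·‖ₑ ^ d) hs,
    ← mul_assoc, ← hd, Real.enorm_of_nonneg hs.le, ← ENNReal.ofReal_pow hs.le,
    ← ENNReal.ofReal_mul (by positivity), mul_inv_cancel₀ (by positivity), ENNReal.ofReal_one,
    one_mul]

lemma eLpNorm_comp_smul_sub_le [CompleteSpace F] (hE : finrank ℝ E = 2) {v : E → F}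
    (hv : ContDiff ℝ 1 v) {s : ℝ} (hs : 1 ≤ s) :
    eLpNorm (fun x => v (s • x) - v x) 2 (μ.restrict (ball 0 1)) ≤
      ENNReal.ofReal (√(log s)) * eLpNorm (fderiv ℝ v) 2 μ := by
  have : Nontrivial E := nontrivial_of_finrank_pos (R := ℝ) (by omega)
  have hmeas : Measurable fun x => ‖fderiv ℝ v x‖ₑ ^ 2 := by
    have := hv.continuous_fderiv one_ne_zero
    fun_prop
  rw [← ENNReal.pow_le_pow_left_iff two_ne_zero, mul_pow, eLpNorm_two_sq, eLpNorm_two_sq,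
    ← ENNReal.ofReal_pow (sqrt_nonneg _), sq_sqrt (log_nonneg hs)]
  calc ∫⁻ x in ball 0 1, ‖v (s • x) - v x‖ₑ ^ 2 ∂μ
      ≤ ∫⁻ x in ball 0 1, ENNReal.ofReal (log s) * (∫⁻ t in Ioi (1 : ℝ),
          ENNReal.ofReal t⁻¹ * (‖t • x‖ₑ ^ 2 * ‖fderiv ℝ v (t • x)‖ₑ ^ 2)) ∂μ :=
        lintegral_mono fun x => enorm_smul_sub_sq_le_log_mul_lintegral hv hs x
    _ = ENNReal.ofReal (log s) * ∫⁻ x in ball 0 1, (∫⁻ t in Ioi (1 : ℝ),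
          ENNReal.ofReal t⁻¹ * (‖t • x‖ₑ ^ 2 * ‖fderiv ℝ v (t • x)‖ₑ ^ 2)) ∂μ :=
        lintegral_const_mul' _ _ ENNReal.ofReal_ne_top
    _ ≤ ENNReal.ofReal (log s) * ∫⁻ x, ‖fderiv ℝ v x‖ₑ ^ 2 ∂μ := by
        refine mul_le_mul_right ?_ _
        simpa only [hE] using lintegral_ball_lintegral_Ioi_smul_le μ hmeas

lemma eLpNorm_two_comp_smul_le [CompleteSpace F] (hE : finrank ℝ E = 2) {v : E → F}
    (hv : ContDiff ℝ 1 v) {s : ℝ} (hs : 1 ≤ s) :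
    eLpNorm (fun x => v (s • x)) 2 (μ.restrict (ball 0 1)) ≤
      eLpNorm v 2 (μ.restrict (ball 0 1)) +
        ENNReal.ofReal (√(log s)) * eLpNorm (fderiv ℝ v) 2 μ := by
  have hdiff : Continuous fun x => v (s • x) - v x :=
    (hv.continuous.comp (continuous_const_smul s)).sub hv.continuous
  calc eLpNorm (fun x => v (s • x)) 2 (μ.restrict (ball 0 1))
      = eLpNorm (v + fun x => v (s • x) - v x) 2 (μ.restrict (ball 0 1)) := by
        congr with x
        exact (add_sub_cancel (v x) (v (s • x))).symm
    _ ≤ eLpNorm v 2 (μ.restrict (ball 0 1)) +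
          eLpNorm (fun x => v (s • x) - v x) 2 (μ.restrict (ball 0 1)) :=
        eLpNorm_add_le hv.continuous.aestronglyMeasurable hdiff.aestronglyMeasurable one_le_two
    _ ≤ _ := by
        gcongr
        exact eLpNorm_comp_smul_sub_le μ hE hv hs

/-! ### Sobolev inequality on concentric balls -/

variable [FiniteDimensional ℝ F]

lemma exists_eLpNorm_ball_le_of_lt_finrank {p q : ℝ≥0} (hp : 1 ≤ p) (hpd : p < finrank ℝ E)
    (hpq : (p : ℝ)⁻¹ - (finrank ℝ E : ℝ)⁻¹ ≤ (q : ℝ)⁻¹) (c : E) {r R : ℝ} (hr : 0 < r)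
    (hrR : r < R) :
    ∃ K : ℝ≥0, ∀ u : E → F, ContDiff ℝ 1 u → eLpNorm u q (μ.restrict (ball c r)) ≤
      K * (eLpNorm u p (μ.restrict (ball c R)) +
        eLpNorm (fderiv ℝ u) p (μ.restrict (ball c R))) := by
  obtain ⟨ρ, hrρ, hρR⟩ := exists_between hrR
  let χ : ContDiffBump c := ⟨r, ρ, hr, hrρ⟩
  have hχs : tsupport χ ⊆ ball c R := χ.tsupport_eq ▸ closedBall_subset_ball hρR
  obtain ⟨L, hL⟩ := exists_eLpNorm_fderiv_smul_le (F := F) μ χ.contDiff χ.hasCompactSupport hχs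
    (ENNReal.one_le_coe_iff.2 hp)
  let S : ℝ≥0 := eLpNormLESNormFDerivOfLeConst F μ (ball c R) p q
  refine ⟨S * L, fun u hu => ?_⟩
  have hsupp : (⇑χ • u).support ⊆ ball c R :=
    (subset_tsupport _).trans ((tsupport_smul_subset_left χ u).trans hχs)
  calc eLpNorm u q (μ.restrict (ball c r))
      = eLpNorm (⇑χ • u) q (μ.restrict (ball c r)) := by
        refine eLpNorm_congr_ae ?_
        filter_upwards [ae_restrict_mem measurableSet_ball] with x hx
        simp [χ.one_of_mem_closedBall (ball_subset_closedBall hx)]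
    _ ≤ eLpNorm (⇑χ • u) q μ := eLpNorm_mono_measure _ Measure.restrict_le_self
    _ ≤ S * eLpNorm (fderiv ℝ (⇑χ • u)) p μ :=
        eLpNorm_le_eLpNorm_fderiv_of_le μ (χ.contDiff.smul hu) hsupp hp hpd hpq isBounded_ball
    _ ≤ _ := by
        rw [ENNReal.coe_mul, mul_assoc]
        gcongr
        exact hL u hu

lemma exists_eLpNorm_ball_le_of_two_le_finrank (hE : 2 ≤ finrank ℝ E) {q : ℝ≥0} (hq : 0 < q)
    (c : E) {r R : ℝ} (hr : 0 < r) (hrR : r < R) :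
    ∃ K : ℝ≥0, ∀ u : E → F, ContDiff ℝ 1 u → eLpNorm u q (μ.restrict (ball c r)) ≤
      K * (eLpNorm u (finrank ℝ E) (μ.restrict (ball c R)) +
        eLpNorm (fderiv ℝ u) (finrank ℝ E) (μ.restrict (ball c R))) := by
  set d := finrank ℝ E
  have hd1 : (1 : ℝ≥0) < d := by exact_mod_cast hE
  have hd0 : (0 : ℝ≥0) < d := one_pos.trans hd1
  -- `d` is the critical exponent, so use a subcritical `p` whose Sobolev exponent is at least `q`.
  obtain ⟨p, hp, hpd, hpq⟩ :
      ∃ p : ℝ≥0, 1 ≤ p ∧ p < d ∧ (p : ℝ)⁻¹ - (d : ℝ)⁻¹ ≤ (q : ℝ)⁻¹ := by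
    refine ⟨max 1 ((d : ℝ≥0)⁻¹ + q⁻¹)⁻¹, le_max_left _ _, max_lt hd1 ?_, ?_⟩
    · exact inv_lt_of_inv_lt₀ hd0 (lt_add_of_pos_right _ (inv_pos.2 hq))
    · have : (max 1 ((d : ℝ≥0)⁻¹ + q⁻¹)⁻¹)⁻¹ ≤ (d : ℝ≥0)⁻¹ + q⁻¹ :=
        inv_le_of_inv_le₀ (by positivity) (le_max_right _ _)
      rw [sub_le_iff_le_add']
      exact_mod_cast this
  have hpd' : (p : ℝ≥0∞) ≤ (d : ℝ≥0∞) := by exact_mod_cast hpd.le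
  obtain ⟨K, hK⟩ := exists_eLpNorm_ball_le_of_lt_finrank (F := F) μ hp hpd hpq c hr hrR
  let ν := μ.restrict (ball c R)
  have : IsFiniteMeasure ν := ⟨by simpa [ν] using measure_ball_lt_top⟩
  let V : ℝ≥0∞ := ν univ ^ (1 / (p : ℝ≥0∞).toReal - 1 / (d : ℝ≥0∞).toReal)
  have hV : V ≠ ∞ := by
    refine ENNReal.rpow_ne_top_of_nonneg (sub_nonneg.2 ?_) (measure_ne_top _ _)
    exact one_div_le_one_div_of_le (by simpa using one_pos.trans_le hp) (by exact_mod_cast hpd.le)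
  refine ⟨K * V.toNNReal, fun u hu => (hK u hu).trans ?_⟩
  rw [ENNReal.coe_mul, ENNReal.coe_toNNReal hV, mul_assoc, mul_add V, mul_comm V, mul_comm V]
  gcongr
  · exact eLpNorm_le_eLpNorm_mul_rpow_measure_univ hpd' hu.continuous.aestronglyMeasurable
  · exact eLpNorm_le_eLpNorm_mul_rpow_measure_univ hpd'
      (hu.continuous_fderiv one_ne_zero).aestronglyMeasurable

lemma exists_setLIntegral_ball_enorm_rpow_le (hE : finrank ℝ E = 2) {q : ℝ≥0} (hq : 0 < q) :
    ∃ K : ℝ≥0, ∀ v : E → F, ContDiff ℝ 1 v → ∀ s : ℝ, 1 ≤ s →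
      ∫⁻ x in ball 0 (s / 2), ‖v x‖ₑ ^ (q : ℝ) ∂μ ≤ ENNReal.ofReal (s ^ 2) *
        (K * (ENNReal.ofReal (1 + √(log s)) *
          (eLpNorm v 2 (μ.restrict (ball 0 1)) + eLpNorm (fderiv ℝ v) 2 μ))) ^ (q : ℝ) := by
  have : Nontrivial E := nontrivial_of_finrank_pos (R := ℝ) (by omega)
  obtain ⟨K, hK⟩ := exists_eLpNorm_ball_le_of_two_le_finrank (F := F) μ hE.ge hq 0
    one_half_pos one_half_lt_one
  simp only [hE, Nat.cast_ofNat] at hK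
  refine ⟨K, fun v hv s hs => ?_⟩
  have hs0 : 0 < s := one_pos.trans_le hs
  set N := eLpNorm v 2 (μ.restrict (ball 0 1))
  set D := eLpNorm (fderiv ℝ v) 2 μ
  let u : E → F := fun x => v (s • x)
  have hu : ContDiff ℝ 1 u := hv.comp (contDiff_const_smul s)
  have hu_grad : eLpNorm (fderiv ℝ u) 2 (μ.restrict (ball 0 1)) ≤ D :=
    (eLpNorm_mono_measure _ Measure.restrict_le_self).trans_eq (by
      simpa only [hE, Nat.cast_ofNat] using eLpNorm_fderiv_comp_smul μ v hs0)
  have hu_sobolev : eLpNorm u q (μ.restrict (ball 0 (1 / 2))) ≤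
      K * (ENNReal.ofReal (1 + √(log s)) * (N + D)) := by
    refine (hK u hu).trans ?_
    gcongr
    calc _ ≤ N + ENNReal.ofReal (√(log s)) * D + D :=
          add_le_add (eLpNorm_two_comp_smul_le μ hE hv hs) hu_grad
      _ ≤ N + ENNReal.ofReal (√(log s)) * D + D + ENNReal.ofReal (√(log s)) * N := le_self_add
      _ = ENNReal.ofReal (1 + √(log s)) * (N + D) := by
          rw [ENNReal.ofReal_add one_pos.le (sqrt_nonneg _), ENNReal.ofReal_one]
          ring
  have hscale : ∫⁻ x in ball 0 (s / 2), ‖v x‖ₑ ^ (q : ℝ) ∂μ =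
      ENNReal.ofReal (s ^ 2) * eLpNorm u q (μ.restrict (ball 0 (1 / 2))) ^ (q : ℝ) := by
    rw [eLpNorm_nnreal_pow_eq_lintegral hq.ne',
      setLIntegral_ball_comp_smul μ (fun x => ‖v x‖ₑ ^ (q : ℝ)) hs0, hE, ← mul_assoc,
      ← ENNReal.ofReal_mul (by positivity), mul_inv_cancel₀ (by positivity), ENNReal.ofReal_one,
      one_mul, mul_one_div]
  rw [hscale]
  gcongr

/-! ### Summation over dyadic balls -/

lemma exists_setLIntegral_dyadic_ball_enorm_rpow_le (hE : finrank ℝ E = 2) {q : ℝ≥0}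
    (hq : 0 < q) :
    ∃ K : ℝ≥0, ∀ v : E → F, ContDiff ℝ 1 v → ∀ n : ℕ,
      ∫⁻ x in ball 0 (2 ^ (n + 1)), ‖v x‖ₑ ^ (q : ℝ) ∂μ ≤
        ENNReal.ofReal (16 * 4 ^ n * (3 * √(n + 1)) ^ (q : ℝ)) *
          (K * (eLpNorm v 2 (μ.restrict (ball 0 1)) + eLpNorm (fderiv ℝ v) 2 μ)) ^ (q : ℝ) := by
  obtain ⟨K, hK⟩ := exists_setLIntegral_ball_enorm_rpow_le (F := F) μ hE hq
  refine ⟨K, fun v hv n => ?_⟩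
  set T := eLpNorm v 2 (μ.restrict (ball 0 1)) + eLpNorm (fderiv ℝ v) 2 μ
  have hradius : (2 : ℝ) ^ (n + 2) / 2 = 2 ^ (n + 1) := by ring
  have harea : ((2 : ℝ) ^ (n + 2)) ^ 2 = 16 * 4 ^ n := by
    rw [pow_right_comm, pow_add, mul_comm]
    norm_num
  calc ∫⁻ x in ball 0 (2 ^ (n + 1)), ‖v x‖ₑ ^ (q : ℝ) ∂μ
      ≤ ENNReal.ofReal (16 * 4 ^ n) *
          (K * (ENNReal.ofReal (1 + √(log (2 ^ (n + 2)))) * T)) ^ (q : ℝ) := by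
        simpa only [hradius, harea] using hK v hv (2 ^ (n + 2)) (one_le_pow₀ one_le_two)
    _ ≤ ENNReal.ofReal (16 * 4 ^ n) * (K * (ENNReal.ofReal (3 * √(n + 1)) * T)) ^ (q : ℝ) := by
        gcongr
        exact one_add_sqrt_log_two_pow_le n
    _ = ENNReal.ofReal (16 * 4 ^ n * (3 * √(n + 1)) ^ (q : ℝ)) * (K * T) ^ (q : ℝ) := by
        rw [ENNReal.ofReal_mul (p := 16 * 4 ^ n) (by positivity),
          ← ENNReal.ofReal_rpow_of_nonneg (by positivity) q.coe_nonneg, mul_left_comm,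
          ENNReal.mul_rpow_of_nonneg _ _ q.coe_nonneg, mul_assoc]

lemma exists_lintegral_logWeight_mul_enorm_rpow_le (hE : finrank ℝ E = 2) {q : ℝ≥0} (hq : 0 < q)
    {ζ : ℝ} (hζ : 1 + q / 2 < ζ) :
    ∃ C : ℝ≥0, ∀ v : E → F, ContDiff ℝ 1 v →
      ∫⁻ x, ENNReal.ofReal (logWeight ζ ‖x‖) * ‖v x‖ₑ ^ (q : ℝ) ∂μ ≤
        C * (eLpNorm v 2 (μ.restrict (ball 0 1)) + eLpNorm (fderiv ℝ v) 2 μ) ^ (q : ℝ) := by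
  obtain ⟨K, hK⟩ := exists_setLIntegral_dyadic_ball_enorm_rpow_le (F := F) μ hE hq
  have hζ0 : 0 ≤ ζ := le_trans (by positivity) hζ.le
  let w (n : ℕ) : ℝ := 2 ^ ζ * (((4 : ℝ) ^ n)⁻¹ * (n + 1 : ℝ) ^ (-ζ))
  let b (n : ℕ) : ℝ := 16 * 4 ^ n * (3 * √(n + 1)) ^ (q : ℝ)
  let S : ℝ≥0∞ := ∑' n, ENNReal.ofReal (w n * b n)
  have hS : S ≠ ∞ := (summable_dyadic_bounds hζ).tsum_ofReal_ne_top
  refine ⟨S.toNNReal * K ^ (q : ℝ), fun v hv => ?_⟩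
  set T := eLpNorm v 2 (μ.restrict (ball 0 1)) + eLpNorm (fderiv ℝ v) 2 μ
  calc ∫⁻ x, ENNReal.ofReal (logWeight ζ ‖x‖) * ‖v x‖ₑ ^ (q : ℝ) ∂μ
      ≤ ∑' n, ENNReal.ofReal (w n) * ∫⁻ x in ball 0 (2 ^ (n + 1)), ‖v x‖ₑ ^ (q : ℝ) ∂μ :=
        lintegral_logWeight_mul_le_tsum hζ0
          (hv.continuous.enorm.measurable.pow_const (q : ℝ)).aemeasurable
    _ ≤ ∑' n, ENNReal.ofReal (w n * b n) * (K * T) ^ (q : ℝ) := by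
        refine ENNReal.tsum_le_tsum fun n => ?_
        rw [ENNReal.ofReal_mul (p := w n) (by positivity), mul_assoc]
        gcongr
        exact hK v hv n
    _ = ↑(S.toNNReal * K ^ (q : ℝ)) * T ^ (q : ℝ) := by
        rw [ENNReal.tsum_mul_right, ENNReal.mul_rpow_of_nonneg _ _ q.coe_nonneg, ENNReal.coe_mul,
          ENNReal.coe_toNNReal hS, ENNReal.coe_rpow_of_nonneg _ q.coe_nonneg, mul_assoc]

lemma exists_integral_norm_rpow_mul_logWeight_le (hE : finrank ℝ E = 2) {q : ℝ≥0} (hq : 0 < q)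
    {ζ : ℝ} (hζ : 1 + q / 2 < ζ) :
    ∃ C : ℝ, 0 < C ∧ ∀ v : E → F, ContDiff ℝ 1 v →
      MemLp v 2 (μ.restrict (ball 0 1)) → MemLp (fderiv ℝ v) 2 μ →
      ∫ x, ‖v x‖ ^ (q : ℝ) * logWeight ζ ‖x‖ ∂μ ≤
        C * ((eLpNorm v 2 (μ.restrict (ball 0 1))).toReal +
          (eLpNorm (fderiv ℝ v) 2 μ).toReal) ^ (q : ℝ) := by
  obtain ⟨K, hK⟩ := exists_lintegral_logWeight_mul_enorm_rpow_le (F := F) μ hE hq hζ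
  refine ⟨K + 1, by positivity, fun v hv hball hgrad => ?_⟩
  rw [← ENNReal.toReal_add hball.eLpNorm_ne_top hgrad.eLpNorm_ne_top]
  have hT := ENNReal.add_ne_top.2 ⟨hball.eLpNorm_ne_top, hgrad.eLpNorm_ne_top⟩
  set T := eLpNorm v 2 (μ.restrict (ball 0 1)) + eLpNorm (fderiv ℝ v) 2 μ
  have hintegrand (x : E) : ENNReal.ofReal (‖v x‖ ^ (q : ℝ) * logWeight ζ ‖x‖) =
      ENNReal.ofReal (logWeight ζ ‖x‖) * ‖v x‖ₑ ^ (q : ℝ) := by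
    rw [mul_comm, ENNReal.ofReal_mul (logWeight_nonneg _ _),
      ← ENNReal.ofReal_rpow_of_nonneg (norm_nonneg _) q.coe_nonneg, ofReal_norm]
  have hmeas : Measurable fun x => ‖v x‖ ^ (q : ℝ) * logWeight ζ ‖x‖ :=
    (hv.continuous.norm.measurable.pow_const (q : ℝ)).mul
      ((measurable_logWeight ζ).comp measurable_norm)
  calc ∫ x, ‖v x‖ ^ (q : ℝ) * logWeight ζ ‖x‖ ∂μ
      = (∫⁻ x, ENNReal.ofReal (logWeight ζ ‖x‖) * ‖v x‖ₑ ^ (q : ℝ) ∂μ).toReal := by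
        rw [integral_eq_lintegral_of_nonneg_ae _ hmeas.aestronglyMeasurable]
        · simp only [hintegrand]
        · exact .of_forall fun x => mul_nonneg (by positivity) (logWeight_nonneg _ _)
    _ ≤ (K * T ^ (q : ℝ)).toReal := ENNReal.toReal_mono (by finiteness) (hK v hv)
    _ = K * T.toReal ^ (q : ℝ) := by
        rw [ENNReal.toReal_mul, ENNReal.coe_toReal, ENNReal.toReal_rpow]
    _ ≤ (K + 1) * T.toReal ^ (q : ℝ) := by
        gcongr
        exact le_add_of_nonneg_right zero_le_one

theorem weighted_poincare_plane_general (hE : finrank ℝ E = 2) {m ζ : ℝ} (hm : 0 < m)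
    (hζ : 1 + m / 2 < ζ) :
    ∃ C : ℝ, 0 < C ∧ ∀ v : E → F, ContDiff ℝ 1 v →
      Integrable (fun x => ‖fderiv ℝ v x‖ ^ 2) μ →
      (∫ x, ‖v x‖ ^ m * logWeight ζ ‖x‖ ∂μ) ^ (1 / m) ≤
        C * (∫ x in ball 0 1, ‖v x‖ ^ 2 ∂μ) ^ (1 / 2 : ℝ) +
        C * (∫ x, ‖fderiv ℝ v x‖ ^ 2 ∂μ) ^ (1 / 2 : ℝ) := by
  lift m to ℝ≥0 using hm.le
  obtain ⟨K, hK0, hK⟩ := exists_integral_norm_rpow_mul_logWeight_le (F := F) μ hE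
    (NNReal.coe_pos.1 hm) hζ
  refine ⟨K ^ (1 / m : ℝ), rpow_pos_of_pos hK0 _, fun v hv hv2 => ?_⟩
  have hgrad : MemLp (fderiv ℝ v) 2 μ :=
    (memLp_two_iff_integrable_sq_norm (hv.continuous_fderiv one_ne_zero).aestronglyMeasurable).2 hv2
  have hball : MemLp v 2 (μ.restrict (ball 0 1)) :=
    (memLp_two_iff_integrable_sq_norm hv.continuous.aestronglyMeasurable).2
      (((hv.continuous.norm.pow 2).continuousOn.integrableOn_compact
        (isCompact_closedBall (0 : E) 1)).mono_set ball_subset_closedBall)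
  rw [← mul_add, ← toReal_eLpNorm_two_eq_rpow_integral hball,
    ← toReal_eLpNorm_two_eq_rpow_integral hgrad]
  set T := (eLpNorm v 2 (μ.restrict (ball 0 1))).toReal + (eLpNorm (fderiv ℝ v) 2 μ).toReal
  calc (∫ x, ‖v x‖ ^ (m : ℝ) * logWeight ζ ‖x‖ ∂μ) ^ (1 / m : ℝ)
      ≤ (K * T ^ (m : ℝ)) ^ (1 / m : ℝ) :=
        rpow_le_rpow (integral_nonneg fun x => mul_nonneg (by positivity) (logWeight_nonneg _ _))
          (hK v hv hball hgrad) (by positivity)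
    _ = K ^ (1 / m : ℝ) * T := by
        rw [mul_rpow hK0.le (by positivity), ← rpow_mul (by positivity), mul_one_div_cancel hm.ne',
          rpow_one]

end Haar

/-- Weighted Poincaré-type inequality on the plane (Lemma 2.3 of the paper, case Ω = ℝ²). -/
theorem weighted_poincare_plane (m : ℝ) (hm : 2 ≤ m) (ζ : ℝ) (hζ : 1 + m / 2 < ζ) :
    ∃ C : ℝ, 0 < C ∧ ∀ v : E2 → ℝ, ContDiff ℝ 1 v →
      Integrable (fun x => ‖fderiv ℝ v x‖ ^ 2) →
      (∫ x : E2, |v x| ^ m * (Real.exp 1 + ‖x‖ ^ 2)⁻¹ *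
          (Real.log (Real.exp 1 + ‖x‖ ^ 2)) ^ (-ζ)) ^ (1 / m) ≤
        C * (∫ x in ball (0 : E2) 1, (v x) ^ 2) ^ (1 / 2 : ℝ) +
        C * (∫ x : E2, ‖fderiv ℝ v x‖ ^ 2) ^ (1 / 2 : ℝ) := by
  simpa only [logWeight, ← mul_assoc, norm_eq_abs, sq_abs] using
    weighted_poincare_plane_general (F := ℝ) (volume : Measure E2) finrank_euclideanSpace_fin
      (two_pos.trans_le hm) hζ
end
end

section
/- (Improved logarithmic Sobolev inequality of Brezis–Wainger type.) For every p ∈ (2,∞) there exists a constant C = C(p) > 0 such that every continuously differentiable function f : ℝ² → ℝ with f ∈ L^p(ℝ²) and ∇f ∈ L²(ℝ²) ∩ L^p(ℝ²) is bounded and satisfies ‖f‖_{L^∞(ℝ²)}² ≤ C(1 + ‖∇f‖_{L²(ℝ²)}² · log(e + ‖f‖_{L^p(ℝ²)} + ‖∇f‖_{L^p(ℝ²)})). -/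
open MeasureTheory Real Set Metric

noncomputable section

/-! Along a ray from `x`, `F s = f (x + s θ)` satisfies `‖F 0‖ ≤ ‖F r‖ + ∫₀ʳ ‖∇f‖`. Averaging over
`r ∈ [W, 2W]` controls the first term by the `Lᵖ` norm of `f`. For the second, the elementary
inequality `d ≤ A + dᵖ / A ^ (p - 1)` is used with two choices of `A`: one, integrable at the origin
because `p` exceeds the dimension `n`, on a short interval `[0, δ]`, and `A = κ / s` with exponent
`n` on `[δ, 2W]`. The latter costs `κ log (2W / δ)`, the only source of the logarithm. The remaining
terms carry the weight `s ^ (n - 1)`, so averaging over all directions `θ` turns them into integrals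
over the whole space, whatever the base point `x`. Finally `W` is a power of
`T = e + ‖f‖_p + ‖∇f‖_p`, and `κ` balances `κ log T` against `‖∇f‖_nⁿ / κ ^ (n - 1)`. -/

/-- The integrand `(uᵖ + dᵖ) / W + d ^ (m + 1) / κ ^ m`, with `u` and `d` standing for `‖f‖` and
`‖∇f‖`, whose integral over a space of dimension `m + 1` bounds `f` pointwise. Writing the dimension
as `m + 1` avoids truncated subtraction in the weight `s ^ m` of polar coordinates. -/
def energyDensity (m : ℕ) (p W κ u d : ℝ) : ℝ :=
  (u ^ p + d ^ p) / W + d ^ (m + 1) / κ ^ m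

section EnergyDensity

variable {α : Type*} [MeasurableSpace α] {μ : Measure α} {m : ℕ} {p W κ : ℝ} {u d : α → ℝ}

lemma integrable_energyDensity (hu : Integrable (fun y ↦ u y ^ p) μ)
    (hdp : Integrable (fun y ↦ d y ^ p) μ) (hdm : Integrable (fun y ↦ d y ^ (m + 1)) μ) :
    Integrable (fun y ↦ energyDensity m p W κ (u y) (d y)) μ :=
  ((hu.add hdp).div_const W).add (hdm.div_const (κ ^ m))

lemma integral_energyDensity (hu : Integrable (fun y ↦ u y ^ p) μ)
    (hdp : Integrable (fun y ↦ d y ^ p) μ) (hdm : Integrable (fun y ↦ d y ^ (m + 1)) μ) :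
    ∫ y, energyDensity m p W κ (u y) (d y) ∂μ =
      ((∫ y, u y ^ p ∂μ) + ∫ y, d y ^ p ∂μ) / W + (∫ y, d y ^ (m + 1) ∂μ) / κ ^ m := by
  rw [← integral_add hu hdp, ← integral_div, ← integral_div]
  exact integral_add ((hu.add hdp).div_const W) (hdm.div_const (κ ^ m))

end EnergyDensity

section Elementary

lemma le_add_rpow_div_rpow {A d p : ℝ} (hA : 0 < A) (hd : 0 ≤ d) (hp : 1 ≤ p) :
    d ≤ A + d ^ p / A ^ (p - 1) := by
  rcases le_total d A with hdA | hAd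
  · have : 0 ≤ d ^ p / A ^ (p - 1) := by positivity
    linarith
  · have hd0 : 0 < d := hA.trans_le hAd
    have : d ≤ d ^ p / A ^ (p - 1) := by
      rw [le_div_iff₀ (by positivity)]
      calc d * A ^ (p - 1) ≤ d * d ^ (p - 1) := by gcongr
        _ = d ^ p := by rw [mul_comm, ← rpow_add_one hd0.ne', sub_add_cancel]
    linarith

lemma add_le_add_add_rpow_one_div_rpow {a b t p : ℝ} (ha : 0 ≤ a) (hb : 0 ≤ b) (ht : 0 ≤ t)
    (hp : 1 ≤ p) : a + b ≤ (t + a ^ (1 / p) + b ^ (1 / p)) ^ p := by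
  have rpow_root {c : ℝ} (hc : 0 ≤ c) : (c ^ (1 / p)) ^ p = c := by
    rw [one_div, rpow_inv_rpow hc (by linarith)]
  calc a + b = (a ^ (1 / p)) ^ p + (b ^ (1 / p)) ^ p := by rw [rpow_root ha, rpow_root hb]
    _ ≤ (a ^ (1 / p) + b ^ (1 / p)) ^ p :=
      add_rpow_le_rpow_add (by positivity) (by positivity) hp
    _ ≤ (t + a ^ (1 / p) + b ^ (1 / p)) ^ p := by gcongr; linarith

lemma exists_pow_succ_eq_and_div_pow_le {G L : ℝ} (m : ℕ) (hG : 0 ≤ G) (hL : 0 < L) :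
    ∃ S : ℝ, 1 ≤ S ∧ S ^ (m + 1) = 1 + G * L ^ m ∧ G / (S / L) ^ m ≤ S := by
  have hGL : 0 ≤ G * L ^ m := by positivity
  set S := (1 + G * L ^ m) ^ (((m + 1 : ℕ) : ℝ)⁻¹)
  have hpow : S ^ (m + 1) = 1 + G * L ^ m := rpow_inv_natCast_pow (by linarith) m.succ_ne_zero
  have hS1 : 1 ≤ S := one_le_rpow (by linarith) (by positivity)
  refine ⟨S, hS1, hpow, ?_⟩
  rw [div_pow, div_div_eq_mul_div, div_le_iff₀ (by positivity), ← pow_succ', hpow]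
  linarith

end Elementary

section HalfLine

variable {m : ℕ} {p W κ δ ρ : ℝ} {D : ℝ → ℝ}

lemma integral_le_near_zero (hp : m + 1 < p) (hW : 0 < W) (hδ : 0 ≤ δ) (hD : Continuous D)
    (hD0 : ∀ s, 0 ≤ D s) :
    ∫ s in 0..δ, D s ≤ (p - 1) / (p - (m + 1)) * (W * δ ^ (p - (m + 1))) ^ (1 / (p - 1)) +
      ∫ s in 0..δ, s ^ m * (D s ^ p / W) := by
  have hp1 : 0 < p - 1 := by linarith [m.cast_nonneg (α := ℝ)]
  have hpm : 0 < p - (m + 1) := by linarith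
  set α : ℝ := -(m / (p - 1)) with hα
  have hα1 : α + 1 = (p - (m + 1)) / (p - 1) := by rw [hα]; field_simp; ring
  have hα0 : 0 < α + 1 := hα1 ▸ div_pos hpm hp1
  have hA : IntervalIntegrable (fun s : ℝ ↦ W ^ (1 / (p - 1)) * s ^ α) volume 0 δ :=
    (intervalIntegral.intervalIntegrable_rpow' (by linarith)).const_mul _
  have hDp : IntervalIntegrable (fun s ↦ s ^ m * (D s ^ p / W)) volume 0 δ := by
    have : Continuous fun s ↦ D s ^ p := hD.rpow_const fun _ ↦ Or.inr (by linarith)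
    exact Continuous.intervalIntegrable (by fun_prop) _ _
  have pointwise (s : ℝ) (hs : s ∈ Ioo 0 δ) :
      D s ≤ W ^ (1 / (p - 1)) * s ^ α + s ^ m * (D s ^ p / W) := by
    have hs0 : 0 < s := hs.1
    have hApow : (W ^ (1 / (p - 1)) * s ^ α) ^ (p - 1) = W / s ^ m := by
      rw [mul_rpow (by positivity) (by positivity), ← rpow_mul hW.le, ← rpow_mul hs0.le, hα,
        one_div_mul_cancel hp1.ne', neg_mul, div_mul_cancel₀ _ hp1.ne', rpow_one, rpow_neg hs0.le,
        rpow_natCast, div_eq_mul_inv]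
    have h := le_add_rpow_div_rpow (A := W ^ (1 / (p - 1)) * s ^ α) (by positivity) (hD0 s)
      (by linarith : 1 ≤ p)
    rwa [hApow, div_div_eq_mul_div, mul_comm (D s ^ p), mul_div_assoc] at h
  have hAint : ∫ s in 0..δ, W ^ (1 / (p - 1)) * s ^ α =
      (p - 1) / (p - (m + 1)) * (W * δ ^ (p - (m + 1))) ^ (1 / (p - 1)) := by
    rw [intervalIntegral.integral_const_mul, integral_rpow (Or.inl (by linarith)),
      zero_rpow hα0.ne', sub_zero, hα1, mul_rpow hW.le (by positivity), ← rpow_mul hδ,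
      mul_one_div, div_div_eq_mul_div]
    ring
  calc ∫ s in 0..δ, D s
      ≤ ∫ s in 0..δ, (W ^ (1 / (p - 1)) * s ^ α + s ^ m * (D s ^ p / W)) :=
        intervalIntegral.integral_mono_on_of_le_Ioo hδ (hD.intervalIntegrable _ _)
          (hA.add hDp) pointwise
    _ = _ := by rw [intervalIntegral.integral_add hA hDp, hAint]

lemma integral_le_log_add (hκ : 0 < κ) (hδ : 0 < δ) (hδρ : δ ≤ ρ) (hD : Continuous D)
    (hD0 : ∀ s, 0 ≤ D s) :
    ∫ s in δ..ρ, D s ≤ κ * log (ρ / δ) + ∫ s in δ..ρ, s ^ m * (D s ^ (m + 1) / κ ^ m) := by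
  have h0 : (0 : ℝ) ∉ uIcc δ ρ := by
    rw [uIcc_of_le hδρ]
    exact fun h ↦ hδ.not_ge h.1
  have hA : IntervalIntegrable (fun s : ℝ ↦ κ * s⁻¹) volume δ ρ :=
    (intervalIntegral.intervalIntegrable_inv (fun s hs ↦ ne_of_mem_of_not_mem hs h0)
      continuousOn_id).const_mul _
  have hDm : IntervalIntegrable (fun s ↦ s ^ m * (D s ^ (m + 1) / κ ^ m)) volume δ ρ :=
    Continuous.intervalIntegrable (by fun_prop) _ _
  have pointwise (s : ℝ) (hs : s ∈ Icc δ ρ) :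
      D s ≤ κ * s⁻¹ + s ^ m * (D s ^ (m + 1) / κ ^ m) := by
    have hs0 : 0 < s := hδ.trans_le hs.1
    have h := le_add_rpow_div_rpow (A := κ * s⁻¹) (p := (m + 1 : ℕ)) (by positivity) (hD0 s)
      (by simp)
    rw [rpow_natCast, Nat.cast_succ, add_sub_cancel_right, rpow_natCast, mul_pow, inv_pow] at h
    exact h.trans_eq (by field_simp)
  calc ∫ s in δ..ρ, D s
      ≤ ∫ s in δ..ρ, (κ * s⁻¹ + s ^ m * (D s ^ (m + 1) / κ ^ m)) :=
        intervalIntegral.integral_mono_on hδρ (hD.intervalIntegrable _ _) (hA.add hDm) pointwise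
    _ = _ := by
        rw [intervalIntegral.integral_add hA hDm, intervalIntegral.integral_const_mul,
          integral_inv h0]

lemma integral_le_log_add_integral_weighted (hp : m + 1 < p) (hW : 1 ≤ W) (hκ : 0 < κ)
    (hD : Continuous D) (hD0 : ∀ s, 0 ≤ D s) :
    ∫ s in 0..2 * W, D s ≤
      (p - 1) / (p - (m + 1)) + κ * (log 2 + (p - m) / (p - (m + 1)) * log W) +
        ∫ s in 0..2 * W, s ^ m * (D s ^ p / W + D s ^ (m + 1) / κ ^ m) := by
  have hpm : 0 < p - (m + 1) := by linarith
  have hW0 : 0 < W := by linarith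
  have hDp : Continuous fun s ↦ D s ^ p := hD.rpow_const fun _ ↦ Or.inr (by linarith)
  set H : ℝ → ℝ := fun s ↦ s ^ m * (D s ^ p / W + D s ^ (m + 1) / κ ^ m)
  have hHc : Continuous H := by fun_prop
  set δ : ℝ := W ^ (-(p - (m + 1))⁻¹)
  have hδ0 : 0 < δ := by positivity
  have hδ1 : δ ≤ 1 := rpow_le_one_of_one_le_of_nonpos hW (by simpa using hpm.le)
  have hδpow : W * δ ^ (p - (m + 1)) = 1 := by
    rw [← rpow_mul hW0.le, neg_mul, inv_mul_cancel₀ hpm.ne', rpow_neg_one, mul_inv_cancel₀ hW0.ne']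
  have hlog : log (2 * W / δ) = log 2 + (p - m) / (p - (m + 1)) * log W := by
    rw [log_div (by positivity) hδ0.ne', log_mul two_ne_zero hW0.ne', log_rpow hW0]
    field_simp
    ring
  have near : ∫ s in 0..δ, D s ≤ (p - 1) / (p - (m + 1)) + ∫ s in 0..δ, H s := by
    have h := integral_le_near_zero hp hW0 hδ0.le hD hD0
    rw [hδpow, one_rpow, mul_one] at h
    refine h.trans (add_le_add_right (intervalIntegral.integral_mono_on hδ0.le
      (Continuous.intervalIntegrable (by fun_prop) _ _) (hHc.intervalIntegrable _ _)
      fun s hs ↦ mul_le_mul_of_nonneg_left (le_add_of_nonneg_right ?_) (pow_nonneg hs.1 m)) _)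
    have := hD0 s
    positivity
  have far : ∫ s in δ..2 * W, D s ≤ κ * log (2 * W / δ) + ∫ s in δ..2 * W, H s := by
    refine (integral_le_log_add hκ hδ0 (by linarith) hD hD0).trans
      (add_le_add_right (intervalIntegral.integral_mono_on (by linarith)
      (Continuous.intervalIntegrable (by fun_prop) _ _) (hHc.intervalIntegrable _ _)
      fun s hs ↦ mul_le_mul_of_nonneg_left (le_add_of_nonneg_left ?_)
        (pow_nonneg (hδ0.le.trans hs.1) m)) _)
    have := hD0 s
    positivity
  have split_at_delta {g : ℝ → ℝ} (hg : Continuous g) :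
      (∫ s in 0..δ, g s) + ∫ s in δ..2 * W, g s = ∫ s in 0..2 * W, g s :=
    intervalIntegral.integral_add_adjacent_intervals
      (hg.intervalIntegrable 0 δ) (hg.intervalIntegrable δ (2 * W))
  rw [hlog] at far
  linarith [split_at_delta hD, split_at_delta hHc]

variable {G : Type*} [NormedAddCommGroup G] [NormedSpace ℝ G] {F : ℝ → G}

lemma norm_apply_zero_le_average_add_integral (hp : 1 ≤ p) (hρ : 0 < ρ) (hF : Differentiable ℝ F)
    (hD : Continuous D) (hFD : ∀ s, ‖deriv F s‖ ≤ D s) :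
    ‖F 0‖ ≤ 1 + ρ⁻¹ * (∫ s in ρ..2 * ρ, ‖F s‖ ^ p) + ∫ s in 0..2 * ρ, D s := by
  have hFp : IntervalIntegrable (fun s ↦ ‖F s‖ ^ p) volume ρ (2 * ρ) :=
    (hF.continuous.norm.rpow_const fun _ ↦ Or.inr (by linarith)).intervalIntegrable _ _
  have bound (r : ℝ) (hr : r ∈ Icc ρ (2 * ρ)) :
      ‖F 0‖ ≤ ‖F r‖ ^ p + (1 + ∫ s in 0..2 * ρ, D s) := by
    have hr0 : 0 ≤ r := hρ.le.trans hr.1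
    have hFr : ‖F r‖ ≤ 1 + ‖F r‖ ^ p := by
      simpa using le_add_rpow_div_rpow one_pos (norm_nonneg (F r)) hp
    calc ‖F 0‖ ≤ ‖F r‖ + ‖F r - F 0‖ := norm_le_norm_add_norm_sub _ _
      _ ≤ ‖F r‖ + ∫ s in 0..r, D s := by
        gcongr
        exact norm_sub_le_integral_of_norm_deriv_le_of_le hr0 hF.continuous.continuousOn
          hF.differentiableOn (.of_forall fun s _ ↦ hFD s) (hD.intervalIntegrable _ _)
      _ ≤ ‖F r‖ + ∫ s in 0..2 * ρ, D s := by
        gcongr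
        exact intervalIntegral.integral_mono_interval le_rfl hr0 hr.2
          (.of_forall fun s ↦ (norm_nonneg _).trans (hFD s)) (hD.intervalIntegrable _ _)
      _ ≤ ‖F r‖ ^ p + (1 + ∫ s in 0..2 * ρ, D s) := by linarith
  have average : ρ * ‖F 0‖ ≤ (∫ s in ρ..2 * ρ, ‖F s‖ ^ p) + ρ * (1 + ∫ s in 0..2 * ρ, D s) := by
    have h := intervalIntegral.integral_mono_on (μ := volume) (by linarith)
      intervalIntegrable_const (hFp.add intervalIntegrable_const) bound
    rwa [intervalIntegral.integral_add hFp intervalIntegrable_const,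
      intervalIntegral.integral_const, intervalIntegral.integral_const, smul_eq_mul, smul_eq_mul,
      two_mul, add_sub_cancel_right, ← two_mul] at h
  refine (mul_le_mul_iff_right₀ hρ).1 (average.trans_eq ?_)
  field_simp
  ring

lemma norm_apply_zero_le_integral_energyDensity (hp : m + 1 < p) (hW : 1 ≤ W) (hκ : 0 < κ)
    (hF : Differentiable ℝ F) (hD : Continuous D) (hFD : ∀ s, ‖deriv F s‖ ≤ D s) :
    ‖F 0‖ ≤ 1 + (p - 1) / (p - (m + 1)) + κ * (log 2 + (p - m) / (p - (m + 1)) * log W) +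
      ∫ s in 0..2 * W, s ^ m * energyDensity m p W κ ‖F s‖ (D s) := by
  have hp1 : 1 ≤ p := by linarith [m.cast_nonneg (α := ℝ)]
  have hD0 (s : ℝ) : 0 ≤ D s := (norm_nonneg _).trans (hFD s)
  have hFp : Continuous fun s ↦ ‖F s‖ ^ p :=
    hF.continuous.norm.rpow_const fun _ ↦ Or.inr (by linarith)
  have hDp : Continuous fun s ↦ D s ^ p := hD.rpow_const fun _ ↦ Or.inr (by linarith)
  have annulus : W⁻¹ * (∫ s in W..2 * W, ‖F s‖ ^ p) ≤
      ∫ s in 0..2 * W, s ^ m * (‖F s‖ ^ p / W) := by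
    rw [← intervalIntegral.integral_const_mul]
    calc ∫ s in W..2 * W, W⁻¹ * ‖F s‖ ^ p
        ≤ ∫ s in W..2 * W, s ^ m * (‖F s‖ ^ p / W) := by
          refine intervalIntegral.integral_mono_on (by linarith)
            (Continuous.intervalIntegrable (by fun_prop) _ _)
            (Continuous.intervalIntegrable (by fun_prop) _ _) fun s hs ↦ ?_
          rw [inv_mul_eq_div]
          exact le_mul_of_one_le_left (by positivity) (one_le_pow₀ (hW.trans hs.1))
      _ ≤ ∫ s in 0..2 * W, s ^ m * (‖F s‖ ^ p / W) := by
          refine intervalIntegral.integral_mono_interval (by linarith) (by linarith) le_rfl ?_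
            (Continuous.intervalIntegrable (by fun_prop) _ _)
          filter_upwards [ae_restrict_mem measurableSet_Ioc] with s hs
          have := hs.1
          simp only [Pi.zero_apply]
          positivity
  have split : ∫ s in 0..2 * W, s ^ m * energyDensity m p W κ ‖F s‖ (D s) =
      (∫ s in 0..2 * W, s ^ m * (‖F s‖ ^ p / W)) +
        ∫ s in 0..2 * W, s ^ m * (D s ^ p / W + D s ^ (m + 1) / κ ^ m) := by
    rw [← intervalIntegral.integral_add (Continuous.intervalIntegrable (by fun_prop) _ _)
      (Continuous.intervalIntegrable (by fun_prop) _ _)]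
    simp only [energyDensity, ← mul_add, ← add_assoc, add_div]
  linarith [norm_apply_zero_le_average_add_integral hp1 (by linarith : 0 < W) hF hD hFD,
    integral_le_log_add_integral_weighted hp hW hκ hD hD0]

end HalfLine

section Polar

variable {E : Type*} [NormedAddCommGroup E] [NormedSpace ℝ E] [FiniteDimensional ℝ E]
  [MeasurableSpace E] [BorelSpace E] [Nontrivial E] (μ : Measure E) [μ.IsAddHaarMeasure]

lemma lintegral_eq_lintegral_toSphere {g : E → ENNReal} (hg : Measurable g) :
    ∫⁻ y, g y ∂μ = ∫⁻ θ : sphere (0 : E) 1, ∫⁻ r in Ioi (0 : ℝ),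
      ENNReal.ofReal (r ^ (Module.finrank ℝ E - 1)) * g (r • (θ : E)) ∂volume ∂μ.toSphere := by
  calc ∫⁻ y, g y ∂μ = ∫⁻ y : ({0}ᶜ : Set E), g y ∂μ.comap (↑) := by
        rw [lintegral_subtype_comap (measurableSet_singleton _).compl, restrict_compl_singleton]
    _ = ∫⁻ z : sphere (0 : E) 1 × Ioi (0 : ℝ), g ((z.2 : ℝ) • (z.1 : E))
          ∂μ.toSphere.prod (.volumeIoiPow (Module.finrank ℝ E - 1)) := by
        rw [← μ.measurePreserving_homeomorphUnitSphereProd.symm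
          (homeomorphUnitSphereProd E).toMeasurableEquiv |>.lintegral_comp_emb
            (MeasurableEquiv.measurableEmbedding _)]
        rfl
    _ = ∫⁻ θ, ∫⁻ r : Ioi (0 : ℝ), g ((r : ℝ) • (θ : E))
          ∂.volumeIoiPow (Module.finrank ℝ E - 1) ∂μ.toSphere :=
        lintegral_prod _ (by fun_prop)
    _ = _ := by
        refine lintegral_congr fun θ ↦ ?_
        rw [Measure.volumeIoiPow, lintegral_withDensity_eq_lintegral_mul _ (by fun_prop)
          (by fun_prop), ← lintegral_subtype_comap measurableSet_Ioi]
        rfl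

lemma toSphere_real_univ_mul_le_integral_of_forall_ray {g : E → ℝ} (hg : Continuous g)
    (hg0 : ∀ y, 0 ≤ g y) (hgi : Integrable g μ) {a ρ : ℝ} (hρ : 0 ≤ ρ) (x : E)
    (h : ∀ θ : sphere (0 : E) 1,
      a ≤ ∫ s in 0..ρ, s ^ (Module.finrank ℝ E - 1) * g (x + s • (θ : E))) :
    μ.toSphere.real univ * a ≤ ∫ y, g y ∂μ := by
  have ray (θ : sphere (0 : E) 1) : ENNReal.ofReal a ≤ ∫⁻ r in Ioi (0 : ℝ),
      ENNReal.ofReal (r ^ (Module.finrank ℝ E - 1)) * ENNReal.ofReal (g (x + r • (θ : E))) := by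
    have hc : Continuous fun s : ℝ ↦ s ^ (Module.finrank ℝ E - 1) * g (x + s • (θ : E)) := by
      fun_prop
    refine (ENNReal.ofReal_le_ofReal (h θ)).trans ?_
    rw [intervalIntegral.integral_of_le hρ, ofReal_integral_eq_lintegral_ofReal
      (hc.intervalIntegrable 0 ρ).1]
    · refine (lintegral_mono_set Ioc_subset_Ioi_self).trans_eq
        (setLIntegral_congr_fun measurableSet_Ioi fun s hs ↦ ?_)
      exact ENNReal.ofReal_mul (pow_nonneg (le_of_lt hs) _)
    · filter_upwards [ae_restrict_mem measurableSet_Ioc] with s hs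
      exact mul_nonneg (pow_nonneg hs.1.le _) (hg0 _)
  have average : ENNReal.ofReal (μ.toSphere.real univ * a) ≤ ENNReal.ofReal (∫ y, g y ∂μ) := calc
    ENNReal.ofReal (μ.toSphere.real univ * a) = ∫⁻ _, ENNReal.ofReal a ∂μ.toSphere := by
      rw [lintegral_const, mul_comm (ENNReal.ofReal a), ENNReal.ofReal_mul measureReal_nonneg,
        ofReal_measureReal]
    _ ≤ ∫⁻ y, ENNReal.ofReal (g (x + y)) ∂μ := by
      rw [lintegral_eq_lintegral_toSphere μ (by fun_prop)]
      exact lintegral_mono ray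
    _ = ENNReal.ofReal (∫ y, g y ∂μ) := by
      rw [lintegral_add_left_eq_self (fun y ↦ ENNReal.ofReal (g y)),
        ofReal_integral_eq_lintegral_ofReal hgi (.of_forall hg0)]
  exact (ENNReal.ofReal_le_ofReal_iff (integral_nonneg hg0)).1 average

end Polar

section Ray

variable {E G : Type*} [NormedAddCommGroup E] [NormedSpace ℝ E] [NormedAddCommGroup G]
  [NormedSpace ℝ G] {f : E → G} {m : ℕ} {p W κ : ℝ}

lemma norm_apply_le_integral_ray (hp : m + 1 < p) (hf : ContDiff ℝ 1 f) (hW : 1 ≤ W) (hκ : 0 < κ)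
    (x : E) {θ : E} (hθ : ‖θ‖ = 1) :
    ‖f x‖ ≤ 1 + (p - 1) / (p - (m + 1)) + κ * (log 2 + (p - m) / (p - (m + 1)) * log W) +
      ∫ s in 0..2 * W, s ^ m * energyDensity m p W κ ‖f (x + s • θ)‖ ‖fderiv ℝ f (x + s • θ)‖ := by
  have hderiv (s : ℝ) : HasDerivAt (fun s : ℝ ↦ f (x + s • θ)) (fderiv ℝ f (x + s • θ) θ) s := by
    have hline : HasDerivAt (fun s : ℝ ↦ x + s • θ) θ s := by
      simpa using ((hasDerivAt_id s).smul_const θ).const_add x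
    exact (hf.differentiable one_ne_zero _).hasFDerivAt.comp_hasDerivAt s hline
  have hnorm (s : ℝ) : ‖deriv (fun s : ℝ ↦ f (x + s • θ)) s‖ ≤ ‖fderiv ℝ f (x + s • θ)‖ := by
    rw [(hderiv s).deriv]
    simpa [hθ] using (fderiv ℝ f (x + s • θ)).le_opNorm θ
  have hD : Continuous fun s : ℝ ↦ ‖fderiv ℝ f (x + s • θ)‖ :=
    ((hf.continuous_fderiv one_ne_zero).comp (by fun_prop)).norm
  simpa using norm_apply_zero_le_integral_energyDensity hp hW hκ
    (fun s ↦ (hderiv s).differentiableAt) hD hnorm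

end Ray

section Const

variable {E : Type*} [NormedAddCommGroup E] [NormedSpace ℝ E] [MeasurableSpace E] (μ : Measure E)
  {m : ℕ} {p : ℝ}

/-- The constant in `‖f‖_∞ ≤ K (1 + ‖∇f‖ₙⁿ logᵐ T) ^ (1 / n)` on a space of dimension `n = m + 1`,
meant for `p > n`. The measure enters through the total mass of the unit sphere. -/
def brezisWaingerConst (m : ℕ) (p : ℝ) : ℝ :=
  2 + (p - 1) / (p - (m + 1)) + (p - m) / (p - (m + 1)) * p + 2 / μ.toSphere.real univ

lemma brezisWaingerConst_pos (hp : m + 1 < p) : 0 < brezisWaingerConst μ m p := by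
  have hp1 : 1 < p := by linarith [m.cast_nonneg (α := ℝ)]
  have hmp : (m : ℝ) < p := by linarith
  unfold brezisWaingerConst
  positivity

end Const

section Sobolev

variable {E : Type*} [NormedAddCommGroup E] [NormedSpace ℝ E] [FiniteDimensional ℝ E]
  [MeasurableSpace E] [BorelSpace E] (μ : Measure E) [μ.IsAddHaarMeasure]
  {G : Type*} [NormedAddCommGroup G] [NormedSpace ℝ G] {f : E → G} {m : ℕ} {p : ℝ}

lemma toSphere_real_univ_mul_norm_apply_sub_le (hm : Module.finrank ℝ E = m + 1) (hp : m + 1 < p)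
    (hf : ContDiff ℝ 1 f) (hfp : Integrable (fun y ↦ ‖f y‖ ^ p) μ)
    (hdm : Integrable (fun y ↦ ‖fderiv ℝ f y‖ ^ (m + 1)) μ)
    (hdp : Integrable (fun y ↦ ‖fderiv ℝ f y‖ ^ p) μ) {W κ : ℝ} (hW : 1 ≤ W) (hκ : 0 < κ) (x : E) :
    μ.toSphere.real univ * (‖f x‖ -
        (1 + (p - 1) / (p - (m + 1)) + κ * (log 2 + (p - m) / (p - (m + 1)) * log W))) ≤
      ((∫ y, ‖f y‖ ^ p ∂μ) + ∫ y, ‖fderiv ℝ f y‖ ^ p ∂μ) / W +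
        (∫ y, ‖fderiv ℝ f y‖ ^ (m + 1) ∂μ) / κ ^ m := by
  have : Nontrivial E := Module.nontrivial_of_finrank_eq_succ hm
  have hdf : Continuous (fderiv ℝ f) := hf.continuous_fderiv one_ne_zero
  have hfpc : Continuous fun y ↦ ‖f y‖ ^ p :=
    hf.continuous.norm.rpow_const fun _ ↦ Or.inr (by linarith)
  have hdpc : Continuous fun y ↦ ‖fderiv ℝ f y‖ ^ p :=
    hdf.norm.rpow_const fun _ ↦ Or.inr (by linarith)
  rw [← integral_energyDensity hfp hdp hdm]
  refine toSphere_real_univ_mul_le_integral_of_forall_ray μ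
    (by unfold energyDensity; fun_prop) (fun y ↦ by unfold energyDensity; positivity)
    (integrable_energyDensity hfp hdp hdm) (by linarith : 0 ≤ 2 * W) x fun θ ↦ ?_
  rw [hm, Nat.add_sub_cancel]
  exact sub_le_iff_le_add'.2 (norm_apply_le_integral_ray hp hf hW hκ x (norm_eq_of_mem_sphere θ))

lemma norm_apply_le_brezisWaingerConst_mul (hm : Module.finrank ℝ E = m + 1) (hp : m + 1 < p)
    (hf : ContDiff ℝ 1 f) (hfp : Integrable (fun y ↦ ‖f y‖ ^ p) μ)
    (hdm : Integrable (fun y ↦ ‖fderiv ℝ f y‖ ^ (m + 1)) μ)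
    (hdp : Integrable (fun y ↦ ‖fderiv ℝ f y‖ ^ p) μ) {T S : ℝ} (hT : exp 1 ≤ T)
    (hTp : (∫ y, ‖f y‖ ^ p ∂μ) + ∫ y, ‖fderiv ℝ f y‖ ^ p ∂μ ≤ T ^ p) (hS : 1 ≤ S)
    (hSG : (∫ y, ‖fderiv ℝ f y‖ ^ (m + 1) ∂μ) / (S / log T) ^ m ≤ S) (x : E) :
    ‖f x‖ ≤ brezisWaingerConst μ m p * S := by
  have : Nontrivial E := Module.nontrivial_of_finrank_eq_succ hm
  have hT0 : 0 < T := (exp_pos 1).trans_le hT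
  have hL : 1 ≤ log T := (le_log_iff_exp_le hT0).2 hT
  have hT1 : 1 ≤ T := (one_le_exp zero_le_one).trans hT
  have hσ : 0 < μ.toSphere.real univ :=
    ENNReal.toReal_pos (Measure.measure_univ_ne_zero.2 μ.toSphere_ne_zero) (measure_ne_top _ _)
  have ha : 0 ≤ (p - 1) / (p - (m + 1)) := div_nonneg (by linarith) (by linarith)
  unfold brezisWaingerConst
  set σ := μ.toSphere.real univ
  set a := (p - 1) / (p - (m + 1))
  set b := (p - m) / (p - (m + 1))
  have hlog2 : log 2 ≤ log T := by linarith [log_two_lt_d9]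
  have log_le : S / log T * (log 2 + b * log (T ^ p)) ≤ (1 + b * p) * S := by
    rw [log_rpow hT0, div_mul_eq_mul_div, div_le_iff₀ (by linarith)]
    calc S * (log 2 + b * (p * log T)) ≤ S * (log T + b * (p * log T)) :=
          mul_le_mul_of_nonneg_left (by linarith) (by linarith)
      _ = (1 + b * p) * S * log T := by ring
  have sub_le : ‖f x‖ - (1 + a + S / log T * (log 2 + b * log (T ^ p))) ≤ 2 * S / σ := by
    rw [le_div_iff₀' hσ]
    have henergy := div_le_one_of_le₀ hTp (rpow_nonneg hT0.le p)
    have hW : 1 ≤ T ^ p := one_le_rpow hT1 (by linarith)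
    linarith [toSphere_real_univ_mul_norm_apply_sub_le μ hm hp hf hfp hdm hdp
      hW (by positivity : 0 < S / log T) x]
  calc ‖f x‖ ≤ (1 + a) + (1 + b * p) * S + 2 * S / σ := by linarith
    _ ≤ (1 + a) * S + (1 + b * p) * S + 2 * S / σ := by
      gcongr
      exact le_mul_of_one_le_right (by linarith) hS
    _ = (2 + a + b * p + 2 / σ) * S := by ring

lemma norm_apply_pow_le (hm : Module.finrank ℝ E = m + 1) (hp : m + 1 < p)
    (hf : ContDiff ℝ 1 f) (hfp : Integrable (fun y ↦ ‖f y‖ ^ p) μ)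
    (hdm : Integrable (fun y ↦ ‖fderiv ℝ f y‖ ^ (m + 1)) μ)
    (hdp : Integrable (fun y ↦ ‖fderiv ℝ f y‖ ^ p) μ) (x : E) :
    ‖f x‖ ^ (m + 1) ≤ brezisWaingerConst μ m p ^ (m + 1) *
      (1 + (∫ y, ‖fderiv ℝ f y‖ ^ (m + 1) ∂μ) * log (exp 1 + (∫ y, ‖f y‖ ^ p ∂μ) ^ (1 / p) +
        (∫ y, ‖fderiv ℝ f y‖ ^ p ∂μ) ^ (1 / p)) ^ m) := by
  have hA : 0 ≤ ∫ y, ‖f y‖ ^ p ∂μ := integral_nonneg fun y ↦ by positivity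
  have hM : 0 ≤ ∫ y, ‖fderiv ℝ f y‖ ^ p ∂μ := integral_nonneg fun y ↦ by positivity
  have hTp := add_le_add_add_rpow_one_div_rpow hA hM (exp_pos 1).le
    (by linarith [m.cast_nonneg (α := ℝ)] : 1 ≤ p)
  have hT : exp 1 ≤ exp 1 + (∫ y, ‖f y‖ ^ p ∂μ) ^ (1 / p) +
      (∫ y, ‖fderiv ℝ f y‖ ^ p ∂μ) ^ (1 / p) := by
    linarith [rpow_nonneg hA (1 / p), rpow_nonneg hM (1 / p)]
  obtain ⟨S, hS, hSpow, hSG⟩ := exists_pow_succ_eq_and_div_pow_le m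
    (integral_nonneg fun y ↦ by positivity : 0 ≤ ∫ y, ‖fderiv ℝ f y‖ ^ (m + 1) ∂μ)
    (log_pos ((one_lt_exp_iff.2 one_pos).trans_le hT))
  rw [← hSpow, ← mul_pow]
  gcongr
  exact norm_apply_le_brezisWaingerConst_mul μ hm hp hf hfp hdm hdp hT hTp hS hSG x

theorem log_sobolev_brezis_wainger_general (hm : Module.finrank ℝ E = m + 1) (hp : m + 1 < p) :
    ∃ C : ℝ, 0 < C ∧ ∀ f : E → G, ContDiff ℝ 1 f →
      Integrable (fun x ↦ ‖f x‖ ^ p) μ →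
      Integrable (fun x ↦ ‖fderiv ℝ f x‖ ^ (m + 1)) μ →
      Integrable (fun x ↦ ‖fderiv ℝ f x‖ ^ p) μ →
      (∃ B : ℝ, ∀ x, ‖f x‖ ≤ B) ∧
      eLpNorm f ⊤ μ ^ (m + 1) ≤
        ENNReal.ofReal (C * (1 + (∫ x, ‖fderiv ℝ f x‖ ^ (m + 1) ∂μ) *
          log (exp 1 + (∫ x, ‖f x‖ ^ p ∂μ) ^ (1 / p) +
            (∫ x, ‖fderiv ℝ f x‖ ^ p ∂μ) ^ (1 / p)) ^ m)) := by
  refine ⟨_, pow_pos (brezisWaingerConst_pos μ hp) (m + 1), fun f hf hfp hdm hdp ↦ ?_⟩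
  set Q := brezisWaingerConst μ m p ^ (m + 1) * (1 + (∫ x, ‖fderiv ℝ f x‖ ^ (m + 1) ∂μ) *
    log (exp 1 + (∫ x, ‖f x‖ ^ p ∂μ) ^ (1 / p) +
      (∫ x, ‖fderiv ℝ f x‖ ^ p ∂μ) ^ (1 / p)) ^ m)
  have hQ : ∀ x, ‖f x‖ ^ (m + 1) ≤ Q := norm_apply_pow_le μ hm hp hf hfp hdm hdp
  have hQ0 : 0 ≤ Q := (by positivity : 0 ≤ ‖f 0‖ ^ (m + 1)).trans (hQ 0)
  have hroot : (Q ^ (((m + 1 : ℕ) : ℝ)⁻¹)) ^ (m + 1) = Q := rpow_inv_natCast_pow hQ0 m.succ_ne_zero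
  have hB (x : E) : ‖f x‖ ≤ Q ^ (((m + 1 : ℕ) : ℝ)⁻¹) :=
    le_of_pow_le_pow_left₀ m.succ_ne_zero (by positivity) ((hQ x).trans_eq hroot.symm)
  refine ⟨⟨_, hB⟩, ?_⟩
  rw [← hroot, ENNReal.ofReal_pow (by positivity), eLpNorm_exponent_top]
  gcongr
  exact eLpNormEssSup_le_of_ae_bound (.of_forall hB)

end Sobolev

/-- Improved logarithmic Sobolev inequality of Brezis–Wainger type (Lemma 2.7 of the paper):
for p ∈ (2,∞), every C¹ function f with f ∈ L^p, ∇f ∈ L² ∩ L^p is bounded and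
‖f‖_∞² ≤ C(1 + ‖∇f‖₂² log(e + ‖f‖_p + ‖∇f‖_p)). -/
theorem log_sobolev_brezis_wainger (p : ℝ) (hp : 2 < p) :
    ∃ C : ℝ, 0 < C ∧ ∀ f : E2 → ℝ, ContDiff ℝ 1 f →
      Integrable (fun x => |f x| ^ p) →
      Integrable (fun x => ‖fderiv ℝ f x‖ ^ 2) →
      Integrable (fun x => ‖fderiv ℝ f x‖ ^ p) →
      (∃ B : ℝ, ∀ x, |f x| ≤ B) ∧
      eLpNorm f ⊤ volume ^ 2 ≤
        ENNReal.ofReal (C * (1 + (∫ x : E2, ‖fderiv ℝ f x‖ ^ 2) *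
          Real.log (Real.exp 1 + (∫ x : E2, |f x| ^ p) ^ (1 / p) +
            (∫ x : E2, ‖fderiv ℝ f x‖ ^ p) ^ (1 / p)))) := by
  simpa [one_add_one_eq_two] using
    log_sobolev_brezis_wainger_general (E := E2) (G := ℝ) (m := 1) (p := p) volume (by simp)
      (by norm_num; exact hp)
end
end
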